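/- arXiv:1403.0446 — 2 statements merged into one kernel-verified Lean document; each statement's English description precedes it below -/
import Mathlib

section
/- Let R = ℚ[t₁^{±1}, t₂^{±1}, t₃^{±1}] with the S₃-action permuting the variables, R^a = {P ∈ R : σ·P = ε(σ)P for all σ ∈ S₃}, and R^s the ℚ-linear span of all P ∈ R with τ·P = P for some transposition τ ∈ S₃. Let δ ∈ ℚ[t^{±1}] and let I ⊆ R be the ideal generated by t₁t₂t₃ − 1, δ(t₁), δ(t₂) and δ(t₃). Then I = (I ∩ R^s) ⊕ (I ∩ R^a). -/
open LaurentPolynomial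

set_option synthInstance.maxHeartbeats 1000000
set_option maxHeartbeats 1000000
noncomputable section

/-- The Laurent polynomial ring in three variables over `ℚ`, realized as the monoid algebra
of the additive group `ℤ³`. -/
abbrev R3 : Type := AddMonoidAlgebra ℚ (Fin 3 → ℤ)

/-- The additive automorphism of `ℤ³` permuting the coordinates according to `σ`. -/
def permAddEquiv (σ : Equiv.Perm (Fin 3)) : (Fin 3 → ℤ) ≃+ (Fin 3 → ℤ) :=
  { Equiv.arrowCongr σ (Equiv.refl ℤ) with map_add' := fun _ _ => rfl }

/-- The action of `σ ∈ S₃` on `R3`, permuting the three variables. -/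
def permAct (σ : Equiv.Perm (Fin 3)) : R3 ≃ₐ[ℚ] R3 :=
  AddMonoidAlgebra.domCongr ℚ ℚ (permAddEquiv σ)

/-- The antisymmetric part `R^a`: the subspace of elements `P` with `σ·P = ε(σ)P` for all
`σ ∈ S₃`. -/
def Ra : Submodule ℚ R3 :=
  ⨅ σ : Equiv.Perm (Fin 3),
    LinearMap.ker ((permAct σ).toLinearMap - (Equiv.Perm.sign σ : ℤ) • LinearMap.id)

/-- The subspace `R^s`: the span of the elements fixed by some transposition. -/
def Rs : Submodule ℚ R3 :=
  Submodule.span ℚ { P : R3 | ∃ τ : Equiv.Perm (Fin 3), τ.IsSwap ∧ permAct τ P = P }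

/-- The ring homomorphism `ℚ[t^{±1}] → R3` sending `t` to the `j`-th variable `t_j`. -/
def subst (j : Fin 3) : LaurentPolynomial ℚ →+* R3 :=
  AddMonoidAlgebra.mapDomainRingHom ℚ (AddMonoidHom.single (fun _ : Fin 3 => ℤ) j)

/-!
Twist the action of the symmetric group by the sign character. The antisymmetric vectors are the
invariants of the twisted representation. The vectors fixed by a transposition `τ` are those which
the twisted `τ` negates; as `2` is invertible and transpositions generate the group, they span the
kernel of the map to the coinvariants of the twisted representation. Averaging over the group
projects onto the invariants along that kernel and preserves every stable subspace, so each of these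
splits accordingly. The ideal `I` is stable because its generators are permuted.
-/

open Representation Equiv Equiv.Perm
open Module.End (invtSubmodule)

section Averaging

variable {k G V : Type*} [CommRing k] [Group G] [Fintype G] [Invertible (Fintype.card G : k)]
  [AddCommGroup V] [Module k V] (ρ : Representation k G V)

theorem averageMap_apply_eq_smul_sum (v : V) :
    averageMap ρ v = ⅟(Fintype.card G : k) • ∑ g, ρ g v := by
  simp [GroupAlgebra.average]

theorem averageMap_apply_apply (g : G) (v : V) : averageMap ρ (ρ g v) = averageMap ρ v := by
  rw [averageMap, ← asAlgebraHom_single_one ρ g, ← Module.End.mul_apply, ← map_mul,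
    GroupAlgebra.mul_average_right]

theorem coinvariantsKer_le_ker_averageMap :
    Coinvariants.ker ρ ≤ LinearMap.ker (averageMap ρ) := by
  refine Submodule.span_le.2 ?_
  rintro _ ⟨⟨g, v⟩, rfl⟩
  rw [SetLike.mem_coe, LinearMap.mem_ker, map_sub, averageMap_apply_apply, sub_self]

theorem sub_averageMap_mem_coinvariantsKer (v : V) :
    v - averageMap ρ v ∈ Coinvariants.ker ρ := by
  rw [← Coinvariants.mk_eq_iff, averageMap_apply_eq_smul_sum, map_smul, map_sum]
  simp only [Coinvariants.mk_self_apply, Finset.sum_const, Finset.card_univ]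
  rw [← Nat.cast_smul_eq_nsmul k, invOf_smul_smul]

theorem disjoint_coinvariantsKer_invariants :
    Disjoint (Coinvariants.ker ρ) (invariants ρ) := by
  refine Submodule.disjoint_def.2 fun v hker hinv => ?_
  rw [← averageMap_id ρ v hinv]
  exact coinvariantsKer_le_ker_averageMap ρ hker

variable {ρ} {W : Submodule k V}

theorem averageMap_mem_of_mem_invtSubmodule (hW : ∀ g, W ∈ invtSubmodule (ρ g)) {v : V}
    (hv : v ∈ W) : averageMap ρ v ∈ W := by
  rw [averageMap_apply_eq_smul_sum]
  exact W.smul_mem _ (W.sum_mem fun g _ => hW g hv)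

theorem inf_coinvariantsKer_sup_inf_invariants (hW : ∀ g, W ∈ invtSubmodule (ρ g)) :
    W ⊓ Coinvariants.ker ρ ⊔ W ⊓ invariants ρ = W := by
  refine le_antisymm (sup_le inf_le_left inf_le_left) fun v hv => ?_
  have havg : averageMap ρ v ∈ W := averageMap_mem_of_mem_invtSubmodule hW hv
  rw [← sub_add_cancel v (averageMap ρ v)]
  exact Submodule.add_mem_sup ⟨W.sub_mem hv havg, sub_averageMap_mem_coinvariantsKer ρ v⟩
    ⟨havg, averageMap_invariant ρ v⟩

end Averaging

section SignTwist

variable {k α V : Type*} [CommRing k] [Fintype α] [DecidableEq α] [AddCommGroup V] [Module k V]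

/-- The tensor product of a representation of a symmetric group with the sign character, realized
on the same underlying module. Its invariants are the antisymmetric vectors. -/
def signTwist (ρ : Representation k (Perm α) V) : Representation k (Perm α) V where
  toFun σ := sign σ • ρ σ
  map_one' := by simp
  map_mul' σ τ := by rw [Perm.sign_mul, map_mul, smul_mul_smul_comm]

theorem signTwist_apply (ρ : Representation k (Perm α) V) (σ : Perm α) (v : V) :
    signTwist ρ σ v = sign σ • ρ σ v := rfl

theorem signTwist_apply_of_isSwap (ρ : Representation k (Perm α) V) {τ : Perm α}
    (hτ : τ.IsSwap) (v : V) : signTwist ρ τ v = -ρ τ v := by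
  rw [signTwist_apply, hτ.sign_eq, Units.neg_smul, one_smul]

theorem mem_invariants_signTwist {ρ : Representation k (Perm α) V} {v : V} :
    v ∈ invariants (signTwist ρ) ↔ ∀ σ, ρ σ v = sign σ • v := by
  simp only [mem_invariants, signTwist_apply, smul_eq_iff_eq_inv_smul, Int.units_inv_eq_self]

theorem mem_invtSubmodule_signTwist {ρ : Representation k (Perm α) V} {W : Submodule k V}
    {σ : Perm α} (hW : W ∈ invtSubmodule (ρ σ)) : W ∈ invtSubmodule (signTwist ρ σ) :=
  fun _ hv => W.smul_of_tower_mem (sign σ) (hW hv)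

/-- The span of the vectors fixed by some transposition: the analogue of `R^s` for an arbitrary
representation of a symmetric group. -/
def swapFixedSpan (ρ : Representation k (Perm α) V) : Submodule k V :=
  Submodule.span k {v | ∃ τ : Perm α, τ.IsSwap ∧ ρ τ v = v}

theorem signTwist_apply_sub_mem_swapFixedSpan (ρ : Representation k (Perm α) V) (σ : Perm α)
    (v : V) : signTwist ρ σ v - v ∈ swapFixedSpan ρ := by
  induction σ using swap_induction_on generalizing v with
  | one => simp
  | swap_mul σ x y hxy ih =>
    have hswap : (swap x y).IsSwap := ⟨x, y, hxy, rfl⟩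
    have swap_step (w : V) : signTwist ρ (swap x y) w - w ∈ swapFixedSpan ρ := by
      refine Submodule.subset_span ⟨swap x y, hswap, ?_⟩
      rw [signTwist_apply_of_isSwap ρ hswap, map_sub, map_neg, ← Module.End.mul_apply, ← map_mul,
        swap_mul_self, map_one, Module.End.one_apply]
      abel
    rw [map_mul, Module.End.mul_apply, ← sub_add_sub_cancel _ (signTwist ρ σ v)]
    exact add_mem (swap_step _) (ih v)

theorem isUnit_two_of_isSwap [Invertible (Fintype.card (Perm α) : k)] {τ : Perm α}
    (hτ : τ.IsSwap) : IsUnit (2 : k) := by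
  have two_dvd_card : 2 ∣ Fintype.card (Perm α) := by
    rw [← hτ.orderOf]
    exact orderOf_dvd_card
  exact isUnit_of_dvd_unit (by exact_mod_cast Nat.cast_dvd_cast two_dvd_card)
    (isUnit_of_invertible (Fintype.card (Perm α) : k))

theorem swapFixedSpan_eq_coinvariantsKer_signTwist [Invertible (Fintype.card (Perm α) : k)]
    (ρ : Representation k (Perm α) V) :
    swapFixedSpan ρ = Coinvariants.ker (signTwist ρ) := by
  apply le_antisymm <;> refine Submodule.span_le.2 ?_
  · rintro v ⟨τ, hτ, hfix⟩
    have two_smul_mem : (2 : k) • v ∈ Coinvariants.ker (signTwist ρ) := by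
      have h := neg_mem (Coinvariants.sub_mem_ker (ρ := signTwist ρ) τ v)
      rwa [signTwist_apply_of_isSwap ρ hτ, hfix, neg_sub, sub_neg_eq_add, ← two_smul k] at h
    exact (Submodule.smul_mem_iff_of_isUnit _ (isUnit_two_of_isSwap hτ)).1 two_smul_mem
  · rintro _ ⟨⟨σ, v⟩, rfl⟩
    exact signTwist_apply_sub_mem_swapFixedSpan ρ σ v

theorem stmt12_general [Invertible (Fintype.card (Perm α) : k)] {ρ : Representation k (Perm α) V}
    {W : Submodule k V} (hW : ∀ σ, W ∈ invtSubmodule (ρ σ)) :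
    (W ⊓ swapFixedSpan ρ) ⊓ (W ⊓ invariants (signTwist ρ)) = ⊥ ∧
      (W ⊓ swapFixedSpan ρ) ⊔ (W ⊓ invariants (signTwist ρ)) = W := by
  rw [swapFixedSpan_eq_coinvariantsKer_signTwist]
  exact ⟨((disjoint_coinvariantsKer_invariants _).mono inf_le_right inf_le_right).eq_bot,
    inf_coinvariantsKer_sup_inf_invariants fun σ => mem_invtSubmodule_signTwist (hW σ)⟩

end SignTwist

section LaurentPolynomialsInThreeVariables

theorem permAct_single (σ : Perm (Fin 3)) (a : Fin 3 → ℤ) (c : ℚ) :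
    permAct σ (.single a c) = .single (a ∘ ⇑σ⁻¹) c :=
  AddMonoidAlgebra.domCongr_single ..

/-- The action of `S₃` on `R3` by `permAct`, as a representation. -/
def permRep : Representation ℚ (Perm (Fin 3)) R3 where
  toFun σ := (permAct σ).toLinearMap
  map_one' := by ext; simp [permAct_single]
  map_mul' σ τ := by ext; simp [permAct_single, Function.comp_assoc]

theorem permRep_apply (σ : Perm (Fin 3)) (P : R3) : permRep σ P = permAct σ P := rfl

theorem Rs_eq_swapFixedSpan : Rs = swapFixedSpan permRep := rfl

theorem Ra_eq_invariants_signTwist : Ra = invariants (signTwist permRep) := by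
  ext P
  simp only [Ra, Submodule.mem_iInf, LinearMap.mem_ker, LinearMap.sub_apply, sub_eq_zero,
    mem_invariants_signTwist, permRep_apply]
  rfl

theorem permAct_subst (σ : Perm (Fin 3)) (j : Fin 3) (δ : LaurentPolynomial ℚ) :
    permAct σ (subst j δ) = subst (σ j) δ := by
  induction δ using AddMonoidAlgebra.induction_linear with
  | zero => simp
  | add f g hf hg => simp only [map_add, hf, hg]
  | single n c =>
    simp only [subst, AddMonoidAlgebra.mapDomainRingHom_apply, AddMonoidAlgebra.mapDomain_single,
      permAct_single, AddMonoidHom.single_apply]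
    rw [Pi.single_comp_equiv]
    rfl

/-- The generators `t₁t₂t₃ - 1`, `δ(t₁)`, `δ(t₂)`, `δ(t₃)` of the ideal `I`. -/
def idealGenerators (δ : LaurentPolynomial ℚ) : Set R3 :=
  {subst 0 (T 1) * subst 1 (T 1) * subst 2 (T 1) - 1, subst 0 δ, subst 1 δ, subst 2 δ}

theorem subst_mem_idealGenerators (δ : LaurentPolynomial ℚ) (j : Fin 3) :
    subst j δ ∈ idealGenerators δ := by
  fin_cases j <;> simp [idealGenerators]

theorem permAct_prod_subst (σ : Perm (Fin 3)) (δ : LaurentPolynomial ℚ) :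
    permAct σ (∏ j, subst j δ) = ∏ j, subst j δ := by
  simp only [map_prod, permAct_subst, Equiv.prod_comp σ fun j => subst j δ]

theorem mapsTo_permAct_idealGenerators (σ : Perm (Fin 3)) (δ : LaurentPolynomial ℚ) :
    Set.MapsTo (permAct σ) (idealGenerators δ) (idealGenerators δ) := by
  rintro _ (rfl | rfl | rfl | rfl)
  · rw [← Fin.prod_univ_three fun j => subst j (T 1), map_sub, map_one, permAct_prod_subst,
      Fin.prod_univ_three]
    exact Set.mem_insert _ _
  all_goals
    rw [permAct_subst]
    exact subst_mem_idealGenerators δ _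

theorem span_idealGenerators_mem_invtSubmodule (δ : LaurentPolynomial ℚ) (σ : Perm (Fin 3)) :
    (Ideal.span (idealGenerators δ)).restrictScalars ℚ ∈ invtSubmodule (permRep σ) := by
  have span_le_comap : Ideal.span (idealGenerators δ) ≤
      (Ideal.span (idealGenerators δ)).comap (permAct σ) :=
    Ideal.span_le.2 fun _ hP => Ideal.subset_span (mapsTo_permAct_idealGenerators σ δ hP)
  exact fun _ hP => span_le_comap hP

end LaurentPolynomialsInThreeVariables

theorem stmt12 (δ : LaurentPolynomial ℚ) :
    let I : Ideal R3 := Ideal.span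
      {subst 0 (T 1) * subst 1 (T 1) * subst 2 (T 1) - 1, subst 0 δ, subst 1 δ, subst 2 δ}
    ((I.restrictScalars ℚ ⊓ Rs) ⊓ (I.restrictScalars ℚ ⊓ Ra) = ⊥) ∧
      (I.restrictScalars ℚ ⊓ Rs) ⊔ (I.restrictScalars ℚ ⊓ Ra) = I.restrictScalars ℚ := by
  intro I
  have : Invertible (Fintype.card (Perm (Fin 3)) : ℚ) :=
    invertibleOfNonzero (Nat.cast_ne_zero.2 Fintype.card_ne_zero)
  rw [Rs_eq_swapFixedSpan, Ra_eq_invariants_signTwist]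
  exact stmt12_general (span_idealGenerators_mem_invtSubmodule δ)
end
end

section
/- Let δ₁, δ₂, δ₃ ∈ ℚ[t] be nonzero polynomials with δ_j(0) ≠ 0 for each j. For j = 1, 2, 3 set A_j = ℚ[t^{±1}]/(δ_j) and let η_j ∈ A_j be the class of 1. Let V = (A₁ ⊗_ℚ A₂ ⊗_ℚ A₃)/H, and let R be the quotient of the polynomial ring ℚ[x₁, x₂, x₃] by the ideal generated by x₁x₂x₃ − 1, δ₁(x₁), δ₂(x₂) and δ₃(x₃). Then there is a well-defined ℚ-linear isomorphism R → V sending, for all integers k₁, k₂, k₃ ≥ 0, the class of the monomial x₁^{k₁}x₂^{k₂}x₃^{k₃} to the class of t^{k₁}η₁ ⊗ t^{k₂}η₂ ⊗ t^{k₃}η₃. -/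
open LaurentPolynomial TensorProduct

set_option synthInstance.maxHeartbeats 1000000
set_option maxHeartbeats 1000000
set_option maxSynthPendingDepth 3
noncomputable section

abbrev LQuot (K : Type) [Field K] (p : LaurentPolynomial K) : Type :=
  LaurentPolynomial K ⧸ Ideal.span {p}

/-- The class of a Laurent polynomial in the quotient by `(p)`. -/
def clsOf (K : Type) [Field K] (p x : LaurentPolynomial K) : LQuot K p :=
  Ideal.Quotient.mk (Ideal.span {p}) x

abbrev Trip (K : Type) [Field K] (p q r : LaurentPolynomial K) : Type :=
  (LQuot K p ⊗[K] LQuot K q) ⊗[K] LQuot K r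

/-- The holonomy subspace: the `K`-span of the elements
`β₁ ⊗ β₂ ⊗ β₃ - tβ₁ ⊗ tβ₂ ⊗ tβ₃`. -/
def holSub (K : Type) [Field K] (p q r : LaurentPolynomial K) :
    Submodule K (Trip K p q r) :=
  Submodule.span K { x | ∃ (a : LQuot K p) (b : LQuot K q) (c : LQuot K r),
    x = (a ⊗ₜ[K] b) ⊗ₜ[K] c -
      (((T 1 : LaurentPolynomial K) • a) ⊗ₜ[K] ((T 1 : LaurentPolynomial K) • b)) ⊗ₜ[K]
        ((T 1 : LaurentPolynomial K) • c) }

/-!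
The ring `K[x₁, x₂, x₃] / (x₁x₂x₃ - 1, δⱼ(xⱼ))` is the universal `K`-algebra carrying roots of
`δ₁, δ₂, δ₃` with product `1`; such roots are automatically invertible. A homomorphism out of
`A₁ ⊗ A₂ ⊗ A₃` is a triple of invertible roots. Since the generator of the holonomy subspace
attached to `β₁, β₂, β₃` equals `(β₁ ⊗ β₂ ⊗ β₃) * (1 - t ⊗ t ⊗ t)`, that subspace is the principal
ideal `(1 - t ⊗ t ⊗ t)`, and dividing by it imposes exactly that the product of the roots is `1`.
Hence both quotients have the same universal property.
-/

section Laurent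

variable {K S : Type*} [CommSemiring K] [CommSemiring S] [Algebra K S]

theorem laurentPolynomial_algHom_ext {f g : K[T;T⁻¹] →ₐ[K] S} (h : f (T 1) = g (T 1)) : f = g :=
  AddMonoidAlgebra.algHom_ext' (MonoidHom.ext_mint h) (Subsingleton.elim _ _)

/-- Evaluation of Laurent polynomials at a unit, as a homomorphism of algebras. -/
def laurentAeval (u : Sˣ) : K[T;T⁻¹] →ₐ[K] S :=
  { LaurentPolynomial.eval₂ (algebraMap K S) u with
    commutes' := LaurentPolynomial.eval₂_C (algebraMap K S) u }

theorem laurentAeval_toLaurent (u : Sˣ) (p : Polynomial K) :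
    laurentAeval u (Polynomial.toLaurent p) = Polynomial.aeval (u : S) p :=
  LaurentPolynomial.eval₂_toLaurent (algebraMap K S) u p

theorem laurentAeval_T_one (u : Sˣ) : laurentAeval (K := K) u (T 1) = (u : S) :=
  (LaurentPolynomial.eval₂_T (algebraMap K S) u 1).trans (by rw [zpow_one])

end Laurent

section RelationRing

variable {ι K S : Type*} [Fintype ι] [CommRing K] [CommRing S] [Algebra K S]

/-- The points of the variety that both sides of the theorem describe: families of roots of the
polynomials `δ i` whose product is `1`. -/
structure IsProdOneRoots (δ : ι → Polynomial K) (x : ι → S) : Prop where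
  prod_eq_one : ∏ i, x i = 1
  aeval_eq_zero (i : ι) : Polynomial.aeval (x i) (δ i) = 0

theorem IsProdOneRoots.isUnit {δ : ι → Polynomial K} {x : ι → S}
    (hx : IsProdOneRoots δ x) (i : ι) : IsUnit (x i) :=
  isUnit_of_dvd_one (hx.prod_eq_one ▸ Finset.dvd_prod_of_mem x (Finset.mem_univ i))

/-- The ideal of `K[xᵢ]` expressing that the `xᵢ` are roots of the `δ i` with product `1`. -/
def relationIdeal (δ : ι → Polynomial K) : Ideal (MvPolynomial ι K) :=
  Ideal.span (insert (∏ i, MvPolynomial.X i - 1)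
    (Set.range fun i ↦ Polynomial.aeval (MvPolynomial.X i) (δ i)))

/-- The universal algebra with roots of the `δ i` whose product is `1`. -/
abbrev RelationRing (δ : ι → Polynomial K) : Type _ := MvPolynomial ι K ⧸ relationIdeal δ

open MvPolynomial in
theorem relationIdeal_fin_three (δ : Fin 3 → Polynomial K) :
    relationIdeal δ = Ideal.span {(X 0 : MvPolynomial (Fin 3) K) * X 1 * X 2 - 1,
      Polynomial.aeval (X 0 : MvPolynomial (Fin 3) K) (δ 0),
      Polynomial.aeval (X 1 : MvPolynomial (Fin 3) K) (δ 1),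
      Polynomial.aeval (X 2 : MvPolynomial (Fin 3) K) (δ 2)} := by
  rw [relationIdeal, Fin.prod_univ_three]
  congr 2
  ext f
  simp [Fin.exists_fin_succ, eq_comm]

namespace RelationRing

/-- The class of the variable `xᵢ`. -/
def root (δ : ι → Polynomial K) (i : ι) : RelationRing δ :=
  Ideal.Quotient.mkₐ K (relationIdeal δ) (MvPolynomial.X i)

theorem isProdOneRoots_root (δ : ι → Polynomial K) : IsProdOneRoots δ (root δ) where
  prod_eq_one := by
    simp only [root, ← map_prod]
    rw [← map_one (Ideal.Quotient.mkₐ K (relationIdeal δ))]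
    exact Ideal.Quotient.eq.2 (Ideal.subset_span (Set.mem_insert _ _))
  aeval_eq_zero i := by
    rw [root, Polynomial.aeval_algHom_apply]
    exact Ideal.Quotient.eq_zero_iff_mem.2 (Ideal.subset_span (Or.inr ⟨i, rfl⟩))

theorem algHom_ext {δ : ι → Polynomial K} {f g : RelationRing δ →ₐ[K] S}
    (h : ∀ i, f (root δ i) = g (root δ i)) : f = g :=
  Ideal.Quotient.algHom_ext _ (MvPolynomial.algHom_ext h)

theorem relationIdeal_le_ker_aeval {δ : ι → Polynomial K} {x : ι → S}
    (hx : IsProdOneRoots δ x) :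
    relationIdeal δ ≤ RingHom.ker (MvPolynomial.aeval (R := K) x) := by
  refine Ideal.span_le.2 (Set.insert_subset ?_ (Set.range_subset_iff.2 fun i ↦ ?_))
  · simp [RingHom.mem_ker, hx.prod_eq_one]
  · simp [RingHom.mem_ker, ← Polynomial.aeval_algHom_apply, hx.aeval_eq_zero]

/-- The homomorphism that the universal property of `RelationRing δ` attaches to a family of roots
with product `1`. -/
def lift {δ : ι → Polynomial K} {x : ι → S} (hx : IsProdOneRoots δ x) : RelationRing δ →ₐ[K] S :=
  Ideal.Quotient.liftₐ _ (MvPolynomial.aeval x) (relationIdeal_le_ker_aeval hx)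

theorem lift_root {δ : ι → Polynomial K} {x : ι → S} (hx : IsProdOneRoots δ x) (i : ι) :
    lift hx (root δ i) = x i :=
  MvPolynomial.aeval_X x i

end RelationRing

end RelationRing

section Holonomy

variable {K : Type} [Field K] {S : Type*} [CommRing S] [Algebra K S]

namespace LQuot

/-- The class of `t` in `K[t, t⁻¹] / (p)`. -/
def root (p : K[T;T⁻¹]) : LQuot K p := clsOf K p (T 1)

theorem clsOf_T_one_pow (p : K[T;T⁻¹]) (k : ℕ) : clsOf K p (T 1 ^ k) = root p ^ k :=
  map_pow (Ideal.Quotient.mk _) _ _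

theorem T_one_smul (p : K[T;T⁻¹]) (a : LQuot K p) : (T 1 : K[T;T⁻¹]) • a = a * root p :=
  (Algebra.smul_def _ a).trans (mul_comm _ _)

theorem aeval_root (δ : Polynomial K) :
    Polynomial.aeval (root (Polynomial.toLaurent δ)) δ = 0 := by
  have root_eq : root (Polynomial.toLaurent δ) =
      ((Ideal.Quotient.mkₐ K (Ideal.span {Polynomial.toLaurent δ})).comp
        Polynomial.toLaurentAlg) Polynomial.X := by
    simp [root, clsOf]
  rw [root_eq, Polynomial.aeval_algHom_apply, Polynomial.aeval_X_left_apply]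
  exact Ideal.Quotient.eq_zero_iff_mem.2 (Ideal.mem_span_singleton_self _)

theorem algHom_ext {p : K[T;T⁻¹]} {f g : LQuot K p →ₐ[K] S} (h : f (root p) = g (root p)) :
    f = g :=
  Ideal.Quotient.algHom_ext _ (laurentPolynomial_algHom_ext h)

/-- The homomorphism out of `K[t, t⁻¹] / (δ)` sending `t` to a given invertible root of `δ`. -/
def lift {δ : Polynomial K} {u : Sˣ} (hu : Polynomial.aeval (u : S) δ = 0) :
    LQuot K (Polynomial.toLaurent δ) →ₐ[K] S :=
  Ideal.Quotient.liftₐ _ (laurentAeval u) <| (Ideal.span_singleton_le_iff_mem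
    (RingHom.ker (laurentAeval u))).2 ((laurentAeval_toLaurent u δ).trans hu)

theorem lift_root {δ : Polynomial K} {u : Sˣ} (hu : Polynomial.aeval (u : S) δ = 0) :
    lift hu (root _) = (u : S) :=
  laurentAeval_T_one u

end LQuot

namespace Trip

/-- The elements `t ⊗ 1 ⊗ 1`, `1 ⊗ t ⊗ 1` and `1 ⊗ 1 ⊗ t`. -/
def root (p q r : K[T;T⁻¹]) : Fin 3 → Trip K p q r :=
  ![(LQuot.root p ⊗ₜ 1) ⊗ₜ 1, (1 ⊗ₜ LQuot.root q) ⊗ₜ 1, 1 ⊗ₜ LQuot.root r]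

theorem root_pow_mul_root_pow_mul_root_pow (p q r : K[T;T⁻¹]) (k₁ k₂ k₃ : ℕ) :
    root p q r 0 ^ k₁ * root p q r 1 ^ k₂ * root p q r 2 ^ k₃ =
      ((LQuot.root p ^ k₁) ⊗ₜ (LQuot.root q ^ k₂)) ⊗ₜ (LQuot.root r ^ k₃) := by
  simp [root, Algebra.TensorProduct.tmul_pow, Algebra.TensorProduct.one_def]

theorem prod_root (p q r : K[T;T⁻¹]) :
    ∏ i, root p q r i = (LQuot.root p ⊗ₜ LQuot.root q) ⊗ₜ LQuot.root r := by
  simpa [Fin.prod_univ_three] using root_pow_mul_root_pow_mul_root_pow p q r 1 1 1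

theorem algHom_ext {p q r : K[T;T⁻¹]} {f g : Trip K p q r →ₐ[K] S}
    (h : ∀ i, f (root p q r i) = g (root p q r i)) : f = g :=
  Algebra.TensorProduct.ext
    (Algebra.TensorProduct.ext (LQuot.algHom_ext (h 0)) (LQuot.algHom_ext (h 1)))
    (LQuot.algHom_ext (h 2))

theorem tmul_sub_smul_tmul {p q r : K[T;T⁻¹]} (a : LQuot K p) (b : LQuot K q) (c : LQuot K r) :
    (a ⊗ₜ[K] b) ⊗ₜ[K] c - (((T 1 : K[T;T⁻¹]) • a) ⊗ₜ[K] ((T 1 : K[T;T⁻¹]) • b)) ⊗ₜ[K]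
        ((T 1 : K[T;T⁻¹]) • c) =
      ((a ⊗ₜ[K] b) ⊗ₜ[K] c) * (1 - ∏ i, root p q r i) := by
  simp only [prod_root, mul_sub, mul_one, Algebra.TensorProduct.tmul_mul_tmul, LQuot.T_one_smul]

end Trip

/-- The holonomy subspace as an ideal, with the single generator `1 - t ⊗ t ⊗ t`. -/
def holonomyIdeal (p q r : K[T;T⁻¹]) : Ideal (Trip K p q r) :=
  Ideal.span {1 - ∏ i, Trip.root p q r i}

theorem mul_one_sub_prod_root_mem_holSub {p q r : K[T;T⁻¹]} (z : Trip K p q r) :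
    z * (1 - ∏ i, Trip.root p q r i) ∈ holSub K p q r := by
  have mulRight_vanishes : (holSub K p q r).mkQ ∘ₗ
      LinearMap.mulRight K (1 - ∏ i, Trip.root p q r i) = 0 :=
    TensorProduct.ext_threefold fun a b c ↦ (Submodule.Quotient.mk_eq_zero _).2 <|
      Submodule.subset_span ⟨a, b, c, (Trip.tmul_sub_smul_tmul a b c).symm⟩
  exact (Submodule.Quotient.mk_eq_zero _).1 (LinearMap.congr_fun mulRight_vanishes z)

theorem holonomyIdeal_restrictScalars (p q r : K[T;T⁻¹]) :
    (holonomyIdeal p q r).restrictScalars K = holSub K p q r := by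
  apply le_antisymm
  · intro x hx
    obtain ⟨z, rfl⟩ := Ideal.mem_span_singleton'.1 (Submodule.restrictScalars_mem K _ x |>.1 hx)
    exact mul_one_sub_prod_root_mem_holSub z
  · rw [holSub, Submodule.span_le]
    rintro _ ⟨a, b, c, rfl⟩
    rw [Trip.tmul_sub_smul_tmul]
    exact Ideal.mul_mem_left _ _ (Ideal.mem_span_singleton_self _)

/-- As a vector space, the quotient by the holonomy ideal is the quotient by the holonomy
subspace. -/
def quotHolonomyIdealEquiv (p q r : K[T;T⁻¹]) :
    (Trip K p q r ⧸ holonomyIdeal p q r) ≃ₗ[K] (Trip K p q r ⧸ holSub K p q r) :=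
  (Submodule.Quotient.restrictScalarsEquiv K (holonomyIdeal p q r)).symm ≪≫ₗ
    Submodule.quotEquivOfEq _ _ (holonomyIdeal_restrictScalars p q r)

/-- The algebra `A₁ ⊗ A₂ ⊗ A₃` attached to three ordinary polynomials. -/
abbrev PolyTrip (δ : Fin 3 → Polynomial K) : Type :=
  Trip K (Polynomial.toLaurent (δ 0)) (Polynomial.toLaurent (δ 1)) (Polynomial.toLaurent (δ 2))

namespace PolyTrip

/-- The elements `t ⊗ 1 ⊗ 1`, `1 ⊗ t ⊗ 1` and `1 ⊗ 1 ⊗ t` of `A₁ ⊗ A₂ ⊗ A₃`. -/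
abbrev root (δ : Fin 3 → Polynomial K) : Fin 3 → PolyTrip δ := Trip.root _ _ _

theorem aeval_root (δ : Fin 3 → Polynomial K) (i : Fin 3) :
    Polynomial.aeval (root δ i) (δ i) = 0 := by
  have aeval_map_root {d : Polynomial K} (f : LQuot K (Polynomial.toLaurent d) →ₐ[K] PolyTrip δ) :
      Polynomial.aeval (f (LQuot.root _)) d = 0 := by
    rw [Polynomial.aeval_algHom_apply, LQuot.aeval_root, map_zero]
  fin_cases i
  · exact aeval_map_root (d := δ 0)
      (Algebra.TensorProduct.includeLeft.comp Algebra.TensorProduct.includeLeft)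
  · exact aeval_map_root (d := δ 1)
      (Algebra.TensorProduct.includeLeft.comp Algebra.TensorProduct.includeRight)
  · exact aeval_map_root (d := δ 2) Algebra.TensorProduct.includeRight

/-- The homomorphism out of `A₁ ⊗ A₂ ⊗ A₃` sending `t` in each factor to a given invertible root. -/
def lift {δ : Fin 3 → Polynomial K} {u : Fin 3 → Sˣ}
    (hu : ∀ i, Polynomial.aeval (u i : S) (δ i) = 0) : PolyTrip δ →ₐ[K] S :=
  Algebra.TensorProduct.productMap
    (Algebra.TensorProduct.productMap (LQuot.lift (hu 0)) (LQuot.lift (hu 1))) (LQuot.lift (hu 2))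

theorem lift_root {δ : Fin 3 → Polynomial K} {u : Fin 3 → Sˣ}
    (hu : ∀ i, Polynomial.aeval (u i : S) (δ i) = 0) (i : Fin 3) :
    lift hu (root δ i) = u i := by
  fin_cases i <;> simp [lift, Trip.root, LQuot.lift_root]

end PolyTrip

/-- The quotient of `A₁ ⊗ A₂ ⊗ A₃` by the holonomy subspace, as an algebra. -/
abbrev HolonomyRing (δ : Fin 3 → Polynomial K) : Type :=
  PolyTrip δ ⧸ holonomyIdeal (Polynomial.toLaurent (δ 0)) (Polynomial.toLaurent (δ 1))
    (Polynomial.toLaurent (δ 2))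

namespace HolonomyRing

/-- The projection from `A₁ ⊗ A₂ ⊗ A₃`. -/
def mk (δ : Fin 3 → Polynomial K) : PolyTrip δ →ₐ[K] HolonomyRing δ := Ideal.Quotient.mkₐ K _

/-- The class of `t ⊗ 1 ⊗ 1`, `1 ⊗ t ⊗ 1` or `1 ⊗ 1 ⊗ t`. -/
def root (δ : Fin 3 → Polynomial K) (i : Fin 3) : HolonomyRing δ := mk δ (PolyTrip.root δ i)

theorem isProdOneRoots_root (δ : Fin 3 → Polynomial K) : IsProdOneRoots δ (root δ) where
  prod_eq_one := by
    simp only [root, ← map_prod]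
    rw [← map_one (mk δ)]
    exact (Ideal.Quotient.eq.2 (Ideal.mem_span_singleton_self _)).symm
  aeval_eq_zero i := by
    rw [root, Polynomial.aeval_algHom_apply, PolyTrip.aeval_root, map_zero]

theorem algHom_ext {δ : Fin 3 → Polynomial K} {f g : HolonomyRing δ →ₐ[K] S}
    (h : ∀ i, f (root δ i) = g (root δ i)) : f = g :=
  Ideal.Quotient.algHom_ext _ (Trip.algHom_ext h)

theorem holonomyIdeal_le_ker_lift {δ : Fin 3 → Polynomial K} {u : Fin 3 → Sˣ}
    (hu : IsProdOneRoots δ fun i ↦ (u i : S)) :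
    holonomyIdeal _ _ _ ≤ RingHom.ker (PolyTrip.lift hu.aeval_eq_zero) := by
  rw [holonomyIdeal, Ideal.span_singleton_le_iff_mem, RingHom.mem_ker, map_sub, map_one, map_prod,
    Finset.prod_congr rfl fun i _ ↦ PolyTrip.lift_root hu.aeval_eq_zero i, hu.prod_eq_one, sub_self]

/-- The homomorphism that the universal property of `HolonomyRing δ` attaches to a triple of roots
with product `1`. -/
def lift {δ : Fin 3 → Polynomial K} {x : Fin 3 → S} (hx : IsProdOneRoots δ x) :
    HolonomyRing δ →ₐ[K] S :=
  Ideal.Quotient.liftₐ _ (PolyTrip.lift (u := fun i ↦ (hx.isUnit i).unit) hx.aeval_eq_zero)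
    (holonomyIdeal_le_ker_lift (u := fun i ↦ (hx.isUnit i).unit) hx)

theorem lift_root {δ : Fin 3 → Polynomial K} {x : Fin 3 → S} (hx : IsProdOneRoots δ x)
    (i : Fin 3) : lift hx (root δ i) = x i :=
  PolyTrip.lift_root (u := fun i ↦ (hx.isUnit i).unit) hx.aeval_eq_zero i

end HolonomyRing

/-- The comparison of the two universal algebras. -/
def relationRingEquivHolonomyRing (δ : Fin 3 → Polynomial K) :
    RelationRing δ ≃ₐ[K] HolonomyRing δ :=
  AlgEquiv.ofAlgHom (RelationRing.lift (HolonomyRing.isProdOneRoots_root δ))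
    (HolonomyRing.lift (RelationRing.isProdOneRoots_root δ))
    (HolonomyRing.algHom_ext (S := HolonomyRing δ) fun i ↦ by
      simp [HolonomyRing.lift_root, RelationRing.lift_root])
    (RelationRing.algHom_ext fun i ↦ by simp [HolonomyRing.lift_root, RelationRing.lift_root])

theorem relationRingEquivHolonomyRing_monomial (δ : Fin 3 → Polynomial K) (k₁ k₂ k₃ : ℕ) :
    relationRingEquivHolonomyRing δ (Ideal.Quotient.mk _
      (MvPolynomial.X 0 ^ k₁ * MvPolynomial.X 1 ^ k₂ * MvPolynomial.X 2 ^ k₃)) =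
      HolonomyRing.mk δ ((clsOf K _ (T 1 ^ k₁) ⊗ₜ[K] clsOf K _ (T 1 ^ k₂)) ⊗ₜ[K]
        clsOf K _ (T 1 ^ k₃)) := by
  have map_X (i : Fin 3) : relationRingEquivHolonomyRing δ
      (Ideal.Quotient.mk _ (MvPolynomial.X i)) = HolonomyRing.mk δ (PolyTrip.root δ i) :=
    RelationRing.lift_root (HolonomyRing.isProdOneRoots_root δ) i
  simp only [map_mul, map_pow, map_X, LQuot.clsOf_T_one_pow,
    ← Trip.root_pow_mul_root_pow_mul_root_pow]

end Holonomy

open MvPolynomial in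
theorem stmt13_general {K : Type} [Field K] (δ₁ δ₂ δ₃ : Polynomial K) :
    ∃ e : (MvPolynomial (Fin 3) K ⧸ Ideal.span
          {(X 0 : MvPolynomial (Fin 3) K) * X 1 * X 2 - 1,
            Polynomial.aeval (X 0 : MvPolynomial (Fin 3) K) δ₁,
            Polynomial.aeval (X 1 : MvPolynomial (Fin 3) K) δ₂,
            Polynomial.aeval (X 2 : MvPolynomial (Fin 3) K) δ₃}) ≃ₗ[K]
        (Trip K (Polynomial.toLaurent δ₁) (Polynomial.toLaurent δ₂)
            (Polynomial.toLaurent δ₃) ⧸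
          holSub K (Polynomial.toLaurent δ₁) (Polynomial.toLaurent δ₂)
            (Polynomial.toLaurent δ₃)),
      ∀ k₁ k₂ k₃ : ℕ,
        e (Ideal.Quotient.mk _ ((X 0 : MvPolynomial (Fin 3) K) ^ k₁ * X 1 ^ k₂ * X 2 ^ k₃)) =
          Submodule.Quotient.mk
            ((clsOf K (Polynomial.toLaurent δ₁) (T 1 ^ k₁) ⊗ₜ[K]
                clsOf K (Polynomial.toLaurent δ₂) (T 1 ^ k₂)) ⊗ₜ[K]
              clsOf K (Polynomial.toLaurent δ₃) (T 1 ^ k₃)) := by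
  let δ := ![δ₁, δ₂, δ₃]
  let quotEquiv := quotHolonomyIdealEquiv (Polynomial.toLaurent δ₁) (Polynomial.toLaurent δ₂)
    (Polynomial.toLaurent δ₃)
  exact ⟨(Ideal.quotientEquivAlgOfEq K (relationIdeal_fin_three δ).symm).toLinearEquiv ≪≫ₗ
    (relationRingEquivHolonomyRing δ).toLinearEquiv ≪≫ₗ quotEquiv, fun k₁ k₂ k₃ ↦
      congrArg quotEquiv (relationRingEquivHolonomyRing_monomial δ k₁ k₂ k₃)⟩

open MvPolynomial in
theorem stmt13 (δ₁ δ₂ δ₃ : Polynomial ℚ) (h₁ : δ₁ ≠ 0) (h₂ : δ₂ ≠ 0) (h₃ : δ₃ ≠ 0)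
    (h0₁ : δ₁.eval 0 ≠ 0) (h0₂ : δ₂.eval 0 ≠ 0) (h0₃ : δ₃.eval 0 ≠ 0) :
    ∃ e : (MvPolynomial (Fin 3) ℚ ⧸ Ideal.span
          {(X 0 : MvPolynomial (Fin 3) ℚ) * X 1 * X 2 - 1,
            Polynomial.aeval (X 0 : MvPolynomial (Fin 3) ℚ) δ₁,
            Polynomial.aeval (X 1 : MvPolynomial (Fin 3) ℚ) δ₂,
            Polynomial.aeval (X 2 : MvPolynomial (Fin 3) ℚ) δ₃}) ≃ₗ[ℚ]
        (Trip ℚ (Polynomial.toLaurent δ₁) (Polynomial.toLaurent δ₂)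
            (Polynomial.toLaurent δ₃) ⧸
          holSub ℚ (Polynomial.toLaurent δ₁) (Polynomial.toLaurent δ₂)
            (Polynomial.toLaurent δ₃)),
      ∀ k₁ k₂ k₃ : ℕ,
        e (Ideal.Quotient.mk _ ((X 0 : MvPolynomial (Fin 3) ℚ) ^ k₁ * X 1 ^ k₂ * X 2 ^ k₃)) =
          Submodule.Quotient.mk
            ((clsOf ℚ (Polynomial.toLaurent δ₁) (T 1 ^ k₁) ⊗ₜ[ℚ]
                clsOf ℚ (Polynomial.toLaurent δ₂) (T 1 ^ k₂)) ⊗ₜ[ℚ]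
              clsOf ℚ (Polynomial.toLaurent δ₃) (T 1 ^ k₃)) :=
  stmt13_general δ₁ δ₂ δ₃
end
end
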